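/- For all integers m ≥ 1 and n ≥ 2, χ_la(P_{2m} ∨ C_{2n−1}) = 5. -/

import Mathlib

open Finset SimpleGraph
open scoped Classical

/-- The induced vertex label (weight) of `x`: the sum of `f` over all edges incident to `x`. -/
noncomputable def vertexWeight {V : Type*} [Fintype V] (G : SimpleGraph V)
    (f : Sym2 V → ℕ) (x : V) : ℕ :=
  ∑ e ∈ G.edgeFinset.filter (fun e => x ∈ e), f e

/-- `f` is a local antimagic labeling of `G`: it restricts to a bijection from the edge set of
`G` onto `{1, …, q}` (where `q` is the number of edges), and adjacent vertices get distinct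
induced vertex labels. -/
def IsLocalAntimagic {V : Type*} [Fintype V] (G : SimpleGraph V) (f : Sym2 V → ℕ) : Prop :=
  Set.BijOn f G.edgeSet (Set.Icc 1 G.edgeSet.ncard) ∧
  ∀ ⦃x y : V⦄, G.Adj x y → vertexWeight G f x ≠ vertexWeight G f y

/-- The number of distinct induced vertex labels, `c(f)`. -/
noncomputable def colorCount {V : Type*} [Fintype V] (G : SimpleGraph V)
    (f : Sym2 V → ℕ) : ℕ :=
  (Finset.univ.image (vertexWeight G f)).card

/-- The local antimagic chromatic number `χ_la(G)`. -/
noncomputable def chiLA {V : Type*} [Fintype V] (G : SimpleGraph V) : ℕ :=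
  sInf { n | ∃ f : Sym2 V → ℕ, IsLocalAntimagic G f ∧ colorCount G f = n }

/-- The join `G ∨ H` of two vertex-disjoint graphs. -/
def joinG {α β : Type*} (G : SimpleGraph α) (H : SimpleGraph β) : SimpleGraph (α ⊕ β) :=
  SimpleGraph.fromRel (fun x y =>
    (∃ a b, x = Sum.inl a ∧ y = Sum.inl b ∧ G.Adj a b) ∨
    (∃ a b, x = Sum.inr a ∧ y = Sum.inr b ∧ H.Adj a b) ∨
    (∃ a b, x = Sum.inl a ∧ y = Sum.inr b))

/-!
The weights of a local antimagic labeling form a proper coloring, and the chromatic number is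
superadditive under joins, so at least `χ(P_{2m}) + χ(C_{2n-1}) = 2 + 3` weights occur.

For the converse put `k = n - 1` and single out one cycle vertex as the hub. The labels
`1, …, 4m + 2k` go to the path, the cycle and the edges from the path to the hub, in such a way
that the sum of these labels at a path vertex depends only on the parity of the vertex and, at the
cycle vertices off the hub, alternates between two values. The remaining `4mk` labels fill the
`2m × 2k` rectangle of edges between the path and the rest of the cycle; they are paired within
`2 × 2` blocks so that all column sums agree and the row sums depend only on the parity of the row.
The path then carries two weights and the cycle three.
-/

section Weights

variable {V : Type*} [Fintype V] (G : SimpleGraph V) (f : Sym2 V → ℕ)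

lemma vertexWeight_eq_sum_neighbors [DecidableRel G.Adj] (x : V) :
    vertexWeight G f x = ∑ y with G.Adj x y, f s(x, y) := by
  rw [vertexWeight, ← sum_image (f := f) (g := (s(x, ·))) fun y _ z _ => Sym2.congr_right.1]
  refine sum_congr (Finset.ext fun e => ?_) fun _ _ => rfl
  simp only [mem_filter, mem_edgeFinset, mem_image, mem_univ, true_and]
  constructor
  · rintro ⟨he, y, rfl⟩
    exact ⟨y, he, rfl⟩
  · rintro ⟨y, hxy, rfl⟩
    exact ⟨hxy, Sym2.mem_mk_left x y⟩

variable {G f}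

lemma IsLocalAntimagic.chromaticNumber_le_colorCount (hf : IsLocalAntimagic G f) :
    G.chromaticNumber ≤ colorCount G f := by
  let weightColoring : G.Coloring (univ.image (vertexWeight G f)) :=
    Coloring.mk (fun x => ⟨vertexWeight G f x, mem_image_of_mem _ (mem_univ x)⟩)
      fun hxy h => hf.2 hxy (congrArg Subtype.val h)
  simpa only [Fintype.card_coe, colorCount] using weightColoring.colorable.chromaticNumber_le

lemma chiLA_eq_of_le_chromaticNumber {c : ℕ} (hG : c ≤ G.chromaticNumber)
    (hf : IsLocalAntimagic G f) (hc : colorCount G f ≤ c) : chiLA G = c := by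
  have le_count {g : Sym2 V → ℕ} (hg : IsLocalAntimagic G g) : c ≤ colorCount G g :=
    mod_cast hG.trans hg.chromaticNumber_le_colorCount
  refine le_antisymm (Nat.sInf_le ⟨f, hf, hc.antisymm (le_count hf)⟩) ?_
  refine le_csInf ⟨_, f, hf, rfl⟩ ?_
  rintro _ ⟨g, hg, rfl⟩
  exact le_count hg

end Weights

lemma bijOn_of_surjOn_of_ncard_le {α β : Type*} {f : α → β} {s : Set α} {t : Set β}
    (hs : s.Finite) (hf : Set.SurjOn f s t) (hst : s.ncard ≤ t.ncard) : Set.BijOn f s t := by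
  have image_eq : t = f '' s :=
    Set.eq_of_subset_of_ncard_le hf ((Set.ncard_image_le hs).trans hst) (hs.image f)
  have ncard_image : (f '' s).ncard = s.ncard :=
    (Set.ncard_image_le hs).antisymm (image_eq ▸ hst)
  exact image_eq ▸ (Set.injOn_of_ncard_image_eq ncard_image hs).bijOn_image

section Join

variable {α β : Type*} (G : SimpleGraph α) (H : SimpleGraph β)

@[simp]
lemma joinG_adj_inl_inl {a a' : α} : (joinG G H).Adj (.inl a) (.inl a') ↔ G.Adj a a' := by
  simpa [joinG, G.adj_comm a' a] using fun h : G.Adj a a' => h.ne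

@[simp]
lemma joinG_adj_inr_inr {b b' : β} : (joinG G H).Adj (.inr b) (.inr b') ↔ H.Adj b b' := by
  simpa [joinG, H.adj_comm b' b] using fun h : H.Adj b b' => h.ne

@[simp]
lemma joinG_adj_inl_inr (a : α) (b : β) : (joinG G H).Adj (.inl a) (.inr b) := by
  simp [joinG]

@[simp]
lemma joinG_adj_inr_inl (a : α) (b : β) : (joinG G H).Adj (.inr b) (.inl a) :=
  (joinG_adj_inl_inr G H a b).symm

lemma chromaticNumber_add_le_chromaticNumber_joinG :
    G.chromaticNumber + H.chromaticNumber ≤ (joinG G H).chromaticNumber := by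
  rw [(joinG G H).chromaticNumber_eq_biInf]
  refine le_iInf₂ fun n ⟨C⟩ => ?_
  let A : Set (Fin n) := Set.range fun a => C (.inl a)
  let B : Set (Fin n) := Set.range fun b => C (.inr b)
  have hAB : Disjoint A B := by
    rw [Set.disjoint_left]
    rintro _ ⟨a, rfl⟩ ⟨b, hb⟩
    exact C.valid (joinG_adj_inr_inl G H a b) hb
  have hG : G.Colorable (Fintype.card A) :=
    (Coloring.mk (fun a => (⟨_, a, rfl⟩ : A)) fun h e =>
      C.valid ((joinG_adj_inl_inl G H).2 h) (congrArg Subtype.val e)).colorable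
  have hH : H.Colorable (Fintype.card B) :=
    (Coloring.mk (fun b => (⟨_, b, rfl⟩ : B)) fun h e =>
      C.valid ((joinG_adj_inr_inr G H).2 h) (congrArg Subtype.val e)).colorable
  have card_le : Fintype.card A + Fintype.card B ≤ n := by
    rw [← Set.toFinset_card, ← Set.toFinset_card,
      ← card_union_of_disjoint (Set.disjoint_toFinset.2 hAB)]
    exact (card_le_univ _).trans_eq (Fintype.card_fin n)
  calc G.chromaticNumber + H.chromaticNumber
      ≤ (Fintype.card A : ℕ∞) + Fintype.card B :=
        add_le_add hG.chromaticNumber_le hH.chromaticNumber_le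
    _ ≤ n := mod_cast card_le

lemma edgeSet_joinG : (joinG G H).edgeSet =
    Sym2.map .inl '' G.edgeSet ∪ Sym2.map .inr '' H.edgeSet ∪
      Set.range fun p : α × β => s(.inl p.1, .inr p.2) := by
  apply Set.Subset.antisymm
  · intro e
    induction e using Sym2.ind with
    | _ x y =>
      intro h
      rcases x with a | b <;> rcases y with a' | b'
      · exact .inl (.inl ⟨s(a, a'), (joinG_adj_inl_inl G H).1 h, rfl⟩)
      · exact .inr ⟨(a, b'), rfl⟩
      · exact .inr ⟨(a', b), Sym2.eq_swap⟩
      · exact .inl (.inr ⟨s(b, b'), (joinG_adj_inr_inr G H).1 h, rfl⟩)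
  · rintro _ ((⟨e, he, rfl⟩ | ⟨e, he, rfl⟩) | ⟨⟨a, b⟩, rfl⟩)
    · induction e using Sym2.ind with
      | _ a a' => exact (joinG_adj_inl_inl G H).2 he
    · induction e using Sym2.ind with
      | _ b b' => exact (joinG_adj_inr_inr G H).2 he
    · exact joinG_adj_inl_inr G H a b

lemma ncard_edgeSet_joinG_le [Finite α] [Finite β] : (joinG G H).edgeSet.ncard ≤
    G.edgeSet.ncard + H.edgeSet.ncard + Nat.card α * Nat.card β := by
  rw [edgeSet_joinG, ← Nat.card_prod, ← Set.ncard_univ, ← Set.image_univ]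
  refine (Set.ncard_union_le _ _).trans (add_le_add ((Set.ncard_union_le _ _).trans
    (add_le_add ?_ ?_)) ?_) <;>
  exact Set.ncard_image_le (Set.toFinite _)

/-- The edge labeling of `G ∨ H` that restricts to `p` on `G` and to `c` on `H`, and assigns the
label `b x y` to the edge joining `x ∈ V(G)` to `y ∈ V(H)`. -/
def joinLabeling (p : Sym2 α → ℕ) (c : Sym2 β → ℕ) (b : α → β → ℕ) : Sym2 (α ⊕ β) → ℕ :=
  Sym2.lift ⟨fun
    | .inl x, .inl x' => p s(x, x')
    | .inr y, .inr y' => c s(y, y')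
    | .inl x, .inr y => b x y
    | .inr y, .inl x => b x y, by
      rintro (x | y) (x' | y') <;> simp only [Sym2.eq_swap]⟩

variable (p : Sym2 α → ℕ) (c : Sym2 β → ℕ) (b : α → β → ℕ)

lemma image_joinLabeling : joinLabeling p c b '' (joinG G H).edgeSet =
    p '' G.edgeSet ∪ c '' H.edgeSet ∪ Set.range fun x : α × β => b x.1 x.2 := by
  have left : joinLabeling p c b ∘ Sym2.map .inl = p :=
    funext <| Sym2.ind fun _ _ => rfl
  have right : joinLabeling p c b ∘ Sym2.map .inr = c :=
    funext <| Sym2.ind fun _ _ => rfl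
  rw [edgeSet_joinG, Set.image_union, Set.image_union, ← Set.image_comp, ← Set.image_comp, left,
    right, ← Set.range_comp]
  rfl

variable [Fintype α] [Fintype β]

lemma vertexWeight_joinLabeling_inl (x : α) :
    vertexWeight (joinG G H) (joinLabeling p c b) (.inl x) =
      vertexWeight G p x + ∑ y, b x y := by
  simp [vertexWeight_eq_sum_neighbors, sum_filter, joinLabeling]

lemma vertexWeight_joinLabeling_inr (y : β) :
    vertexWeight (joinG G H) (joinLabeling p c b) (.inr y) =
      vertexWeight H c y + ∑ x, b x y := by
  simp [vertexWeight_eq_sum_neighbors, sum_filter, joinLabeling, add_comm]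

end Join

section Path

/-- The edge labeling of a path on `Fin n` in which the edge `{i, i + 1}` gets the label `P i`. -/
def pathLabeling {n : ℕ} (P : ℕ → ℕ) (e : Sym2 (Fin n)) : ℕ := P e.inf

lemma edgeSet_pathGraph_succ (n : ℕ) :
    (pathGraph (n + 1)).edgeSet = Set.range fun i : Fin n => s(i.castSucc, i.succ) := by
  ext e
  induction e using Sym2.ind with
  | _ u v =>
    simp only [mem_edgeSet, pathGraph_adj, Set.mem_range, Sym2.eq_iff, Fin.ext_iff,
      Fin.val_castSucc, Fin.val_succ]
    constructor
    · rintro (h | h)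
      · exact ⟨⟨u, by omega⟩, .inl ⟨rfl, h⟩⟩
      · exact ⟨⟨v, by omega⟩, .inr ⟨rfl, h⟩⟩
    · rintro ⟨i, h⟩
      omega

lemma ncard_edgeSet_pathGraph_le (n : ℕ) : (pathGraph n).edgeSet.ncard ≤ n - 1 := by
  cases n with
  | zero => simp [Set.eq_empty_of_isEmpty (pathGraph 0).edgeSet]
  | succ n =>
    rw [edgeSet_pathGraph_succ, ← Set.image_univ]
    exact (Set.ncard_image_le Set.finite_univ).trans_eq (by simp [Set.ncard_univ])

lemma mem_image_pathLabeling {n i : ℕ} (P : ℕ → ℕ) (hi : i + 1 < n) :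
    P i ∈ pathLabeling P '' (pathGraph n).edgeSet :=
  ⟨s(⟨i, by omega⟩, ⟨i + 1, hi⟩), pathGraph_adj.2 (.inl rfl), by simp [pathLabeling]⟩

lemma vertexWeight_pathLabeling {n : ℕ} (P : ℕ → ℕ) (i : Fin n) :
    vertexWeight (pathGraph n) (pathLabeling P) i =
      (if i.val = 0 then 0 else P (i - 1)) + if i + 1 < n then P i else 0 := by
  have split_neighbors (a : ℕ) : (if i + 1 = a ∨ a + 1 = i then P (min i a) else 0) =
      (if i - 1 = a then if i.val = 0 then 0 else P (i - 1) else 0) +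
        if i + 1 = a then P i else 0 := by
    grind
  calc vertexWeight (pathGraph n) (pathLabeling P) i
      = ∑ a : Fin n, if i + 1 = a.val ∨ a + 1 = i.val then P (min i a) else 0 := by
        simp [vertexWeight_eq_sum_neighbors, sum_filter, pathGraph_adj, pathLabeling]
    _ = ∑ a ∈ range n, if i + 1 = a ∨ a + 1 = i then P (min i a) else 0 :=
        Fin.sum_univ_eq_sum_range
          (fun a => if i + 1 = a ∨ a + 1 = i then P (min i a) else 0) n
    _ = _ := by
        simp only [split_neighbors, sum_add_distrib, sum_ite_eq, mem_range]
        rw [if_pos (by omega)]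

end Path

section Cycle

/-- The edge labeling of a cycle on `Fin n` in which the edge `{j, j + 1}` gets the label `C j`;
the closing edge `{n - 1, 0}` is the one whose ends are not consecutive naturals. -/
def cycleLabeling {n : ℕ} (C : ℕ → ℕ) (e : Sym2 (Fin n)) : ℕ :=
  if (e.inf : ℕ) + 1 = e.sup then C e.inf else C e.sup

lemma ncard_edgeSet_cycleGraph {n : ℕ} (hn : 3 ≤ n) : (cycleGraph n).edgeSet.ncard = n := by
  obtain ⟨n, rfl⟩ := Nat.exists_eq_add_of_le' hn
  have handshake := (cycleGraph (n + 3)).sum_degrees_eq_twice_card_edges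
  simp only [cycleGraph_degree_three_le, sum_const, card_univ, Fintype.card_fin, smul_eq_mul]
    at handshake
  rw [← coe_edgeFinset, Set.ncard_coe_finset]
  omega

variable {n : ℕ} [NeZero n]

lemma cycleLabeling_add_one (hn : 3 ≤ n) (C : ℕ → ℕ) (j : Fin n) :
    cycleLabeling C s(j, j + 1) = C j := by
  obtain ⟨n, rfl⟩ := Nat.exists_eq_add_of_le' hn
  have val_succ := Fin.val_add_one j
  rcases eq_or_ne j (Fin.last (n + 2)) with rfl | hj
  · simp [cycleLabeling]
  · rw [if_neg hj] at val_succ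
    simp [cycleLabeling, val_succ]

lemma mem_image_cycleLabeling (hn : 3 ≤ n) (C : ℕ → ℕ) (j : Fin n) :
    C j ∈ cycleLabeling C '' (cycleGraph n).edgeSet := by
  refine ⟨s(j, j + 1), ?_, cycleLabeling_add_one hn C j⟩
  obtain ⟨n, rfl⟩ := Nat.exists_eq_add_of_le' hn
  simp [cycleGraph_adj]

lemma vertexWeight_cycleLabeling (hn : 3 ≤ n) (C : ℕ → ℕ) (j : Fin n) :
    vertexWeight (cycleGraph n) (cycleLabeling C) j = C (j - 1 : Fin n) + C j := by
  have pred_ne_succ : j - 1 ≠ j + 1 := by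
    obtain ⟨n, rfl⟩ := Nat.exists_eq_add_of_le' hn
    rw [ne_eq, sub_eq_iff_eq_add, add_assoc, left_eq_add]
    exact ne_of_beq_false rfl
  have neighbors : univ.filter ((cycleGraph n).Adj j) = {j - 1, j + 1} := by
    obtain ⟨n, rfl⟩ := Nat.exists_eq_add_of_le' hn
    ext i
    simp [cycleGraph_adj, sub_eq_iff_eq_add', eq_sub_iff_add_eq, eq_comm]
  have label_pred : cycleLabeling C s(j, j - 1) = C (j - 1 : Fin n) := by
    simpa [Sym2.eq_swap] using cycleLabeling_add_one hn C (j - 1)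
  rw [vertexWeight_eq_sum_neighbors, neighbors, sum_pair pred_ne_succ, label_pred,
    cycleLabeling_add_one hn]

end Cycle

section Labels

/-- The graph `P_{2m} ∨ C_{2k+1}`. -/
abbrev pathJoinOddCycle (m k : ℕ) : SimpleGraph (Fin (2 * m) ⊕ Fin (2 * k + 1)) :=
  joinG (pathGraph (2 * m)) (cycleGraph (2 * k + 1))

/-- The label of the path edge `{i, i + 1}` of `pathJoinOddCycle m k`. -/
def pathSeq (m k i : ℕ) : ℕ :=
  if i % 2 = 0 then 2 * k + 3 * m + i / 2 else k + 2 * m + i / 2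

/-- The label of the cycle edge `{j, j + 1}` of `pathJoinOddCycle m k`, with `j = 2k` for the
closing edge. -/
def cycleSeq (m k j : ℕ) : ℕ :=
  if j % 2 = 0 then 1 + j / 2 else 2 * k + 3 * m - 2 - j / 2

/-- The label of the edge from the path vertex `i` to the cycle vertex `0`. -/
def hubSeq (m k i : ℕ) : ℕ :=
  if i = 0 then 2 * k + 4 * m
  else if i = 2 * m - 1 then 2 * k + 3 * m - 1
  else if i % 2 = 1 then k + 2 * m - 1 - i
  else k + 2 * m + 1 - i

/-- The entries of a `2m × 2k` rectangle filled with `1, …, 4mk`, with constant column sums and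
row sums depending only on the parity of the row. The four entries of a `2 × 2` block are
determined by the rank `t` of the block. -/
def rectEntry (m k i j : ℕ) : ℕ :=
  let t := i / 2 * k + j / 2
  if i % 2 = 0 then
    if j % 2 = 0 then 2 * t + 2 else 4 * (m * k) - 2 * t
  else
    if j % 2 = 0 then 4 * (m * k) - 1 - 2 * t else 2 * t + 1

/-- The labels of the edges between path and cycle: those at the cycle vertex `0` come from
`hubSeq`, the others from `rectEntry`, shifted past the `4m + 2k` labels already in use. -/
def crossLabel (m k i : ℕ) : Fin (2 * k + 1) → ℕ :=
  Fin.cons (hubSeq m k i) fun j : Fin (2 * k) => 4 * m + 2 * k + rectEntry m k i j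

/-- The local antimagic labeling of `pathJoinOddCycle m k` with five colors. -/
def fiveColorLabeling (m k : ℕ) : Sym2 (Fin (2 * m) ⊕ Fin (2 * k + 1)) → ℕ :=
  joinLabeling (pathLabeling (pathSeq m k)) (cycleLabeling (cycleSeq m k))
    fun i => crossLabel m k i

variable {m k : ℕ}

lemma block_rank_lt {I J : ℕ} (hI : I < m) (hJ : J < k) : I * k + J < m * k :=
  calc I * k + J < (I + 1) * k := by linarith
    _ ≤ m * k := Nat.mul_le_mul_right k hI

lemma exists_block_rank_eq {t : ℕ} (ht : t < m * k) : ∃ I < m, ∃ J < k, t = I * k + J :=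
  have hk : 0 < k := Nat.pos_of_mul_pos_left (Nat.zero_lt_of_lt ht)
  ⟨t / k, Nat.div_lt_of_lt_mul (by rwa [mul_comm]), t % k, Nat.mod_lt t hk,
    (Nat.div_add_mod' t k).symm⟩

variable (m k)

lemma rectEntry_even_even (I J : ℕ) : rectEntry m k (2 * I) (2 * J) = 2 * (I * k + J) + 2 := by
  simp [rectEntry]

lemma rectEntry_even_odd (I J : ℕ) :
    rectEntry m k (2 * I) (2 * J + 1) = 4 * (m * k) - 2 * (I * k + J) := by
  simp [rectEntry, Nat.mul_add_div]

lemma rectEntry_odd_even (I J : ℕ) :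
    rectEntry m k (2 * I + 1) (2 * J) = 4 * (m * k) - 1 - 2 * (I * k + J) := by
  simp [rectEntry, Nat.mul_add_div]

lemma rectEntry_odd_odd (I J : ℕ) :
    rectEntry m k (2 * I + 1) (2 * J + 1) = 2 * (I * k + J) + 1 := by
  simp [rectEntry, Nat.mul_add_div]

variable {m k}

lemma sum_fin_two_mul {M : Type*} [AddCommMonoid M] (F : ℕ → M) (n : ℕ) :
    ∑ i : Fin (2 * n), F i = ∑ i ∈ range n, (F (2 * i) + F (2 * i + 1)) := by
  rw [Fin.sum_univ_eq_sum_range]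
  induction n with
  | zero => simp
  | succ n ih =>
    rw [sum_range_succ _ n, ← ih, mul_add_one, sum_range_succ, sum_range_succ, add_assoc]

lemma sum_fin_two_mul_of_pair_sum_eq {F : ℕ → ℕ} {n c : ℕ}
    (hF : ∀ i < n, F (2 * i) + F (2 * i + 1) = c) : ∑ i : Fin (2 * n), F i = n * c := by
  rw [sum_fin_two_mul, sum_congr rfl fun i hi => hF i (mem_range.1 hi), sum_const, card_range,
    smul_eq_mul]

lemma sum_rectEntry_row {i : ℕ} (hi : i < 2 * m) : ∑ j : Fin (2 * k), rectEntry m k i j =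
    if i % 2 = 0 then k * (4 * (m * k) + 2) else k * (4 * (m * k)) := by
  obtain ⟨I, rfl | rfl⟩ := i.even_or_odd'
  · rw [if_pos (by omega)]
    refine sum_fin_two_mul_of_pair_sum_eq fun J hJ => ?_
    have := block_rank_lt (show I < m by omega) hJ
    rw [rectEntry_even_even, rectEntry_even_odd]
    omega
  · rw [if_neg (by omega)]
    refine sum_fin_two_mul_of_pair_sum_eq fun J hJ => ?_
    have := block_rank_lt (show I < m by omega) hJ
    rw [rectEntry_odd_even, rectEntry_odd_odd]
    omega

lemma sum_rectEntry_column {j : ℕ} (hj : j < 2 * k) :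
    ∑ i : Fin (2 * m), rectEntry m k i j = m * (4 * (m * k) + 1) := by
  refine sum_fin_two_mul_of_pair_sum_eq (F := (rectEntry m k · j)) fun I hI => ?_
  obtain ⟨J, rfl | rfl⟩ := j.even_or_odd' <;>
    have := block_rank_lt hI (show J < k by omega)
  · rw [rectEntry_even_even, rectEntry_odd_even]
    omega
  · rw [rectEntry_even_odd, rectEntry_odd_odd]
    omega

lemma exists_rectEntry_eq {e : ℕ} (he : e ∈ Set.Icc 1 (4 * (m * k))) :
    ∃ i < 2 * m, ∃ j < 2 * k, rectEntry m k i j = e := by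
  obtain ⟨one_le, le_area⟩ := he
  obtain ⟨t, ht, eq⟩ : ∃ t < m * k,
      (e = 2 * t + 2 ∨ e = 2 * t + 1) ∨ e = 4 * (m * k) - 2 * t ∨ e = 4 * (m * k) - 1 - 2 * t := by
    by_cases h : e ≤ 2 * (m * k)
    · exact ⟨(e - 1) / 2, by omega, by omega⟩
    · exact ⟨(4 * (m * k) - e) / 2, by omega, by omega⟩
  obtain ⟨I, hI, J, hJ, rfl⟩ := exists_block_rank_eq ht
  rcases eq with (rfl | rfl) | rfl | rfl
  · exact ⟨2 * I, by omega, 2 * J, by omega, rectEntry_even_even m k I J⟩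
  · exact ⟨2 * I + 1, by omega, 2 * J + 1, by omega, rectEntry_odd_odd m k I J⟩
  · exact ⟨2 * I, by omega, 2 * J + 1, by omega, rectEntry_even_odd m k I J⟩
  · exact ⟨2 * I + 1, by omega, 2 * J, by omega, rectEntry_odd_even m k I J⟩

lemma hubSeq_zero (m k : ℕ) : hubSeq m k 0 = 2 * k + 4 * m := if_pos rfl

lemma hubSeq_last (hm : 1 ≤ m) (k : ℕ) : hubSeq m k (2 * m - 1) = 2 * k + 3 * m - 1 := by
  rw [hubSeq, if_neg (by omega), if_pos rfl]

lemma hubSeq_two_mul_add_one {i : ℕ} (hi : i + 1 < m) (k : ℕ) :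
    hubSeq m k (2 * i + 1) = k + 2 * m - 2 - 2 * i := by
  rw [hubSeq, if_neg (by omega), if_neg (by omega), if_pos (by omega)]
  omega

lemma hubSeq_two_mul_add_two {i : ℕ} (hi : i + 1 < m) (k : ℕ) :
    hubSeq m k (2 * i + 2) = k + 2 * m - 1 - 2 * i := by
  rw [hubSeq, if_neg (by omega), if_neg (by omega), if_neg (by omega)]
  omega

lemma sum_hubSeq (hm : 1 ≤ m) (k : ℕ) : ∑ i : Fin (2 * m), hubSeq m k i =
    2 * m ^ 2 + 2 * (m * k) + 6 * m + 2 * k - 2 := by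
  obtain ⟨r, rfl⟩ := Nat.exists_eq_add_of_le' hm
  have sum_odd_even_pairs :
      ∑ i : Fin (2 * r), hubSeq (r + 1) k (i + 1) = r * (2 * k + 2 * r + 3) :=
    calc ∑ i : Fin (2 * r), hubSeq (r + 1) k (i + 1)
        = ∑ i ∈ range r, (2 * k + 5 + 4 * (r - 1 - i)) := by
          rw [sum_fin_two_mul fun i => hubSeq (r + 1) k (i + 1)]
          refine sum_congr rfl fun i hi => ?_
          have := mem_range.1 hi
          rw [hubSeq_two_mul_add_one (by omega), hubSeq_two_mul_add_two (by omega)]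
          omega
      _ = ∑ i ∈ range r, (2 * k + 5 + 4 * i) := sum_range_reflect (fun i => 2 * k + 5 + 4 * i) r
      _ = r * (2 * k + 2 * r + 3) := by
          clear hm
          induction r with
          | zero => simp
          | succ r ih => rw [sum_range_succ, ih]; ring
  have last : hubSeq (r + 1) k (2 * r + 1) = 2 * k + 3 * r + 2 := hubSeq_last hm k
  rw [Fin.sum_univ_eq_sum_range, mul_add_one, sum_range_succ, sum_range_succ',
    ← Fin.sum_univ_eq_sum_range fun i => hubSeq (r + 1) k (i + 1), sum_odd_even_pairs, hubSeq_zero,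
    last]
  refine Nat.eq_sub_of_add_eq ?_
  ring

lemma exists_pathSeq_or_cycleSeq_or_hubSeq_eq {l : ℕ} (hm : 1 ≤ m)
    (hl : l ∈ Set.Icc 1 (4 * m + 2 * k)) :
    (∃ i, i + 1 < 2 * m ∧ pathSeq m k i = l) ∨ (∃ j < 2 * k + 1, cycleSeq m k j = l) ∨
      ∃ i < 2 * m, hubSeq m k i = l := by
  obtain ⟨one_le, le_card⟩ := hl
  obtain h | h | h | h | h | h | h | h :
      l ≤ k + 1 ∨
      (∃ i, i + 1 < m ∧ l = k + 2 * m - 2 - 2 * i) ∨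
      (∃ i, i + 1 < m ∧ l = k + 2 * m - 1 - 2 * i) ∨
      k + 2 * m ≤ l ∧ l < k + 3 * m - 1 ∨
      k + 3 * m - 1 ≤ l ∧ l < 2 * k + 3 * m - 1 ∨
      l = 2 * k + 3 * m - 1 ∨
      2 * k + 3 * m ≤ l ∧ l < 2 * k + 4 * m ∨
      l = 2 * k + 4 * m := by
    by_cases hub : k + 2 ≤ l ∧ l < k + 2 * m
    · rcases Nat.mod_two_eq_zero_or_one (k + 2 * m - l) with h | h
      · exact .inr (.inl ⟨(k + 2 * m - 2 - l) / 2, by omega, by omega⟩)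
      · exact .inr (.inr (.inl ⟨(k + 2 * m - 1 - l) / 2, by omega, by omega⟩))
    · omega
  · exact .inr (.inl ⟨2 * (l - 1), by omega, by unfold cycleSeq; split_ifs <;> omega⟩)
  · obtain ⟨i, hi, rfl⟩ := h
    exact .inr (.inr ⟨2 * i + 1, by omega, hubSeq_two_mul_add_one hi k⟩)
  · obtain ⟨i, hi, rfl⟩ := h
    exact .inr (.inr ⟨2 * i + 2, by omega, hubSeq_two_mul_add_two hi k⟩)
  · exact .inl ⟨2 * (l - (k + 2 * m)) + 1, by omega, by unfold pathSeq; split_ifs <;> omega⟩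
  · exact .inr (.inl ⟨2 * (2 * k + 3 * m - 2 - l) + 1, by omega, by
      unfold cycleSeq; split_ifs <;> omega⟩)
  · exact .inr (.inr ⟨2 * m - 1, by omega, h ▸ hubSeq_last hm k⟩)
  · exact .inl ⟨2 * (l - (2 * k + 3 * m)), by omega, by unfold pathSeq; split_ifs <;> omega⟩
  · exact .inr (.inr ⟨0, by omega, h ▸ hubSeq_zero m k⟩)

lemma vertexWeight_pathSeq_add_hubSeq (i : Fin (2 * m)) :
    vertexWeight (pathGraph (2 * m)) (pathLabeling (pathSeq m k)) i + hubSeq m k i =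
      if i.val % 2 = 0 then 4 * k + 7 * m else 4 * k + 7 * m - 2 := by
  rw [vertexWeight_pathLabeling]
  unfold pathSeq hubSeq
  split_ifs <;> omega

lemma vertexWeight_cycleSeq (hk : 1 ≤ k) (j : Fin (2 * k + 1)) :
    vertexWeight (cycleGraph (2 * k + 1)) (cycleLabeling (cycleSeq m k)) j =
      if j.val = 0 then k + 2 else if j.val % 2 = 1 then 2 * k + 3 * m - 1 else 2 * k + 3 * m := by
  rw [vertexWeight_cycleLabeling (by omega), Fin.coe_sub_one]
  simp only [cycleSeq, Fin.ext_iff, Fin.val_zero]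
  split_ifs <;> omega

end Labels

section Colors

variable (m k : ℕ)

/-- The weight of the path vertex `i` under `fiveColorLabeling`. -/
def pathColor (i : ℕ) : ℕ :=
  if i % 2 = 0 then 4 * (m * k ^ 2) + 4 * k ^ 2 + 8 * (m * k) + 6 * k + 7 * m
  else 4 * (m * k ^ 2) + 4 * k ^ 2 + 8 * (m * k) + 4 * k + 7 * m - 2

/-- The weight of the cycle vertex `j` under `fiveColorLabeling`. -/
def cycleColor (j : ℕ) : ℕ :=
  if j = 0 then 2 * m ^ 2 + 2 * (m * k) + 6 * m + 3 * k
  else if j % 2 = 1 then 4 * (m ^ 2 * k) + 8 * m ^ 2 + 4 * (m * k) + 4 * m + 2 * k - 1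
  else 4 * (m ^ 2 * k) + 8 * m ^ 2 + 4 * (m * k) + 4 * m + 2 * k

lemma vertexWeight_fiveColorLabeling_inl (i : Fin (2 * m)) :
    vertexWeight (pathJoinOddCycle m k) (fiveColorLabeling m k) (.inl i) =
      pathColor m k i := by
  rw [fiveColorLabeling, vertexWeight_joinLabeling_inl, Fin.sum_univ_succ]
  simp only [crossLabel, Fin.cons_zero, Fin.cons_succ]
  rw [sum_add_distrib, sum_rectEntry_row i.2, ← add_assoc, vertexWeight_pathSeq_add_hubSeq,
    sum_const, card_univ, Fintype.card_fin, smul_eq_mul, pathColor]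
  have := i.2
  split_ifs
  · ring
  · rw [← Nat.sub_add_comm (by omega)]
    congr 1
    ring

variable {m k}

lemma vertexWeight_fiveColorLabeling_inr (hm : 1 ≤ m) (hk : 1 ≤ k) (j : Fin (2 * k + 1)) :
    vertexWeight (pathJoinOddCycle m k) (fiveColorLabeling m k) (.inr j) =
      cycleColor m k j := by
  rw [fiveColorLabeling, vertexWeight_joinLabeling_inr, vertexWeight_cycleSeq hk, cycleColor]
  cases j using Fin.cases with
  | zero =>
    simp only [crossLabel, Fin.cons_zero, Fin.val_zero, if_true]
    rw [sum_hubSeq hm]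
    omega
  | succ j =>
    simp only [crossLabel, Fin.cons_succ, Fin.val_succ, Nat.succ_ne_zero, if_false]
    rw [sum_add_distrib, sum_rectEntry_column j.2, sum_const, card_univ, Fintype.card_fin,
      smul_eq_mul]
    split_ifs
    · rw [← Nat.sub_add_comm (by omega)]
      congr 1
      ring
    · ring

lemma eq_of_mul_two_mul_sub_eq {m a c : ℤ} (hm : 0 < m) (hc : 0 < c)
    (h : m * (2 * m - (2 * a - 1)) = c) (hca : c < 3 * (a + 1)) : c = a := by
  -- The factor `2m - (2a - 1)` is odd, so it is either `1` or at least `3`.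
  have factor_pos : 0 < 2 * m - (2 * a - 1) := pos_of_mul_pos_right (h ▸ hc) hm.le
  have a_le : a ≤ m := by omega
  rcases a_le.eq_or_lt with rfl | a_lt
  · linarith
  · nlinarith

lemma cycleColor_zero_ne_pathColor (hm : 1 ≤ m) (hk : 1 ≤ k) (i : ℕ) :
    cycleColor m k 0 ≠ pathColor m k i := by
  intro h
  have hk' : (1 : ℤ) ≤ k := mod_cast hk
  rw [cycleColor, if_pos rfl, pathColor] at h
  split_ifs at h
  · have hz : (m : ℤ) * (2 * m - (2 * (2 * k ^ 2 + 3 * k + 1) - 1)) = 4 * k ^ 2 + 3 * k := by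
      zify at h
      linear_combination h
    have := eq_of_mul_two_mul_sub_eq (by omega) (by nlinarith) hz (by nlinarith)
    omega
  · have hz : (m : ℤ) * (2 * m - (2 * (2 * k ^ 2 + 3 * k + 1) - 1)) = 4 * k ^ 2 + k - 2 := by
      rw [eq_tsub_iff_add_eq_of_le (by omega)] at h
      zify at h
      linear_combination h
    have := eq_of_mul_two_mul_sub_eq (by omega) (by nlinarith) hz (by nlinarith)
    omega

lemma cycleColor_lt_pathColor (hm : 1 ≤ m) (hmk : m ≤ k) {j : ℕ} (hj : j ≠ 0) (i : ℕ) :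
    cycleColor m k j < pathColor m k i := by
  have cubic : m ^ 2 * k ≤ m * k ^ 2 := by
    calc m ^ 2 * k = m * k * m := by ring
      _ ≤ m * k * k := Nat.mul_le_mul_left _ hmk
      _ = m * k ^ 2 := by ring
  have sq_le : m ^ 2 ≤ m * k := by nlinarith
  have le_sq : m * k ≤ k ^ 2 := by nlinarith
  rw [cycleColor, if_neg hj, pathColor]
  split_ifs <;> omega

lemma pathColor_lt_cycleColor (hkm : k < m) (i : ℕ) {j : ℕ} (hj : j ≠ 0) :
    pathColor m k i < cycleColor m k j := by
  have cubic : m * k ^ 2 + m * k ≤ m ^ 2 * k := by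
    calc m * k ^ 2 + m * k = m * k * (k + 1) := by ring
      _ ≤ m * k * m := Nat.mul_le_mul_left _ hkm
      _ = m ^ 2 * k := by ring
  have sq_le : k ^ 2 + k ≤ m * k := by nlinarith
  have le_sq : m * k + m ≤ m ^ 2 := by nlinarith
  rw [cycleColor, if_neg hj, pathColor]
  split_ifs <;> omega

lemma pathColor_ne_cycleColor (hm : 1 ≤ m) (hk : 1 ≤ k) (i j : ℕ) :
    pathColor m k i ≠ cycleColor m k j := by
  rcases eq_or_ne j 0 with rfl | hj
  · exact (cycleColor_zero_ne_pathColor hm hk i).symm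
  · rcases le_or_gt m k with hmk | hkm
    · exact (cycleColor_lt_pathColor hm hmk hj i).ne'
    · exact (pathColor_lt_cycleColor hkm i hj).ne

lemma pathColor_ne_of_adj {a b : Fin (2 * m)} (hab : (pathGraph (2 * m)).Adj a b) :
    pathColor m k a ≠ pathColor m k b := by
  have := pathGraph_adj.1 hab
  have := a.2
  unfold pathColor
  split_ifs <;> omega

lemma cycleColor_ne_of_adj (hm : 1 ≤ m) (hk : 1 ≤ k) {a b : Fin (2 * k + 1)}
    (hab : (cycleGraph (2 * k + 1)).Adj a b) : cycleColor m k a ≠ cycleColor m k b := by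
  have sq_le : m ≤ m ^ 2 := Nat.le_self_pow two_ne_zero m
  have hub_lt {j : ℕ} (hj : j ≠ 0) : cycleColor m k 0 < cycleColor m k j := by
    rw [cycleColor, cycleColor, if_pos rfl, if_neg hj]
    have : k ≤ m * k := Nat.le_mul_of_pos_left k hm
    split_ifs <;> omega
  have succ_ne (j : Fin (2 * k + 1)) : cycleColor m k (j + 1 : Fin _) ≠ cycleColor m k j := by
    rw [Fin.val_add_one]
    split_ifs with hj
    · exact (hub_lt (by rw [hj, Fin.val_last]; omega)).ne
    · rcases eq_or_ne j.val 0 with h | h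
      · exact h ▸ (hub_lt one_ne_zero).ne'
      · rw [cycleColor, cycleColor, if_neg (by omega), if_neg h]
        split_ifs <;> omega
  have val_one : (1 : Fin (2 * k + 1)).val = 1 := Nat.mod_eq_of_lt (show 1 < 2 * k + 1 by omega)
  rcases cycleGraph_adj'.1 hab with h | h
  · obtain rfl : a = b + 1 := sub_eq_iff_eq_add'.1 (Fin.ext (h.trans val_one.symm))
    exact succ_ne b
  · obtain rfl : b = a + 1 := sub_eq_iff_eq_add'.1 (Fin.ext (h.trans val_one.symm))
    exact (succ_ne a).symm

end Colors

section FiveColorLabeling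

variable {m k : ℕ}

lemma ncard_edgeSet_pathJoinOddCycle_le (hm : 1 ≤ m) (hk : 1 ≤ k) :
    (pathJoinOddCycle m k).edgeSet.ncard ≤ 4 * m + 2 * k + 4 * (m * k) := by
  have path_le := ncard_edgeSet_pathGraph_le (2 * m)
  have cycle_eq := ncard_edgeSet_cycleGraph (show 3 ≤ 2 * k + 1 by omega)
  calc (pathJoinOddCycle m k).edgeSet.ncard
      ≤ (2 * m - 1) + (2 * k + 1) + 2 * m * (2 * k + 1) := by
        refine (ncard_edgeSet_joinG_le _ _).trans ?_
        rw [cycle_eq, Nat.card_fin, Nat.card_fin]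
        gcongr
    _ = 2 * m + 2 * k + 2 * m * (2 * k + 1) := by omega
    _ = 4 * m + 2 * k + 4 * (m * k) := by ring

lemma surjOn_fiveColorLabeling (hm : 1 ≤ m) (hk : 1 ≤ k) :
    Set.SurjOn (fiveColorLabeling m k) (pathJoinOddCycle m k).edgeSet
      (Set.Icc 1 (4 * m + 2 * k + 4 * (m * k))) := by
  rintro l ⟨one_le, le_card⟩
  rw [fiveColorLabeling, image_joinLabeling]
  rcases le_or_gt l (4 * m + 2 * k) with small | large
  · obtain ⟨i, hi, rfl⟩ | ⟨j, hj, rfl⟩ | ⟨i, hi, rfl⟩ :=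
      exists_pathSeq_or_cycleSeq_or_hubSeq_eq hm ⟨one_le, small⟩
    · exact .inl (.inl (mem_image_pathLabeling _ hi))
    · exact .inl (.inr (mem_image_cycleLabeling (by omega) _ ⟨j, hj⟩))
    · exact .inr ⟨(⟨i, hi⟩, 0), Fin.cons_zero ..⟩
  · obtain ⟨i, hi, j, hj, entry_eq⟩ := exists_rectEntry_eq (m := m) (k := k)
      (e := l - (4 * m + 2 * k)) ⟨by omega, by omega⟩
    refine .inr ⟨(⟨i, hi⟩, Fin.succ ⟨j, hj⟩), ?_⟩
    simp only [crossLabel, Fin.cons_succ, entry_eq]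
    omega

lemma bijOn_fiveColorLabeling (hm : 1 ≤ m) (hk : 1 ≤ k) :
    Set.BijOn (fiveColorLabeling m k) (pathJoinOddCycle m k).edgeSet
      (Set.Icc 1 (pathJoinOddCycle m k).edgeSet.ncard) := by
  have ncard_Icc (q : ℕ) : (Set.Icc 1 q).ncard = q := by
    rw [← coe_Icc, Set.ncard_coe_finset, Nat.card_Icc, Nat.add_sub_cancel]
  have bij := bijOn_of_surjOn_of_ncard_le (Set.toFinite _) (surjOn_fiveColorLabeling hm hk)
    ((ncard_edgeSet_pathJoinOddCycle_le hm hk).trans_eq (ncard_Icc _).symm)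
  rwa [bij.ncard_eq, ncard_Icc]

lemma isLocalAntimagic_fiveColorLabeling (hm : 1 ≤ m) (hk : 1 ≤ k) :
    IsLocalAntimagic (pathJoinOddCycle m k) (fiveColorLabeling m k) := by
  refine ⟨bijOn_fiveColorLabeling hm hk, ?_⟩
  rintro (a | a) (b | b) hab <;>
    simp only [vertexWeight_fiveColorLabeling_inl, vertexWeight_fiveColorLabeling_inr hm hk]
  · exact pathColor_ne_of_adj ((joinG_adj_inl_inl _ _).1 hab)
  · exact pathColor_ne_cycleColor hm hk a b
  · exact (pathColor_ne_cycleColor hm hk b a).symm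
  · exact cycleColor_ne_of_adj hm hk ((joinG_adj_inr_inr _ _).1 hab)

lemma colorCount_fiveColorLabeling_le (hm : 1 ≤ m) (hk : 1 ≤ k) :
    colorCount (pathJoinOddCycle m k) (fiveColorLabeling m k) ≤ 5 := by
  have weight_mem (x : Fin (2 * m) ⊕ Fin (2 * k + 1)) :
      vertexWeight (pathJoinOddCycle m k) (fiveColorLabeling m k) x ∈
        ({pathColor m k 0, pathColor m k 1, cycleColor m k 0, cycleColor m k 1,
          cycleColor m k 2} : Finset ℕ) := by
    rcases x with i | j
    · rw [vertexWeight_fiveColorLabeling_inl]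
      grind [pathColor]
    · rw [vertexWeight_fiveColorLabeling_inr hm hk]
      grind [cycleColor]
  exact (card_le_card (image_subset_iff.2 fun x _ => weight_mem x)).trans card_le_five

end FiveColorLabeling

lemma five_le_chromaticNumber_pathJoinOddCycle {m k : ℕ} (hm : 1 ≤ m) (hk : 1 ≤ k) :
    5 ≤ (pathJoinOddCycle m k).chromaticNumber :=
  calc (5 : ℕ∞) = 2 + 3 := by norm_num
    _ = (pathGraph (2 * m)).chromaticNumber + (cycleGraph (2 * k + 1)).chromaticNumber := by
        rw [chromaticNumber_pathGraph _ (by omega),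
          chromaticNumber_cycleGraph_of_odd _ (by omega) (odd_two_mul_add_one k)]
    _ ≤ _ := chromaticNumber_add_le_chromaticNumber_joinG _ _

/-- Theorem: For all integers `m ≥ 1` and `n ≥ 2`, `χ_la(P_{2m} ∨ C_{2n−1}) = 5`. -/
theorem chiLA_path_join_oddCycle (m n : ℕ) (hm : 1 ≤ m) (hn : 2 ≤ n) :
    chiLA (joinG (pathGraph (2 * m)) (cycleGraph (2 * n - 1))) = 5 := by
  obtain ⟨k, rfl⟩ : ∃ k, n = k + 1 := ⟨n - 1, by omega⟩
  have hk : 1 ≤ k := by omega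
  exact chiLA_eq_of_le_chromaticNumber (five_le_chromaticNumber_pathJoinOddCycle hm hk)
    (isLocalAntimagic_fiveColorLabeling hm hk) (colorCount_fiveColorLabeling_le hm hk)
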